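/- Let C_1 = x_0 x_1 ⋯ x_{2n-1} x_0 and C_2 = y_0 y_1 ⋯ y_{2m-1} y_0 be two vertex-disjoint alternating cycles and let G be a 2-edge-colored graph in C_1 ⊕ C_2 such that G has no good pair. Then G has exactly 2mn red exterior edges and exactly 2mn blue exterior edges. -/

import Mathlib

/-- An alternating cycle of length `N` in the 2-edge-colored graph `(G, c)`
(colors: `true` = red, `false` = blue). -/
def IsAltCycle {V : Type*} (G : SimpleGraph V) (c : Sym2 V → Bool) {N : ℕ}
    (x : ZMod N → V) : Prop :=
  Function.Injective x ∧ (∀ i, G.Adj (x i) (x (i + 1))) ∧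
    ∀ i, c s(x i, x (i + 1)) ≠ c s(x (i + 1), x (i + 2))

/-- There is a good pair of edges between the two vertex-disjoint alternating
cycles `x` and `y`. -/
def HasGoodPair {V : Type*} (G : SimpleGraph V) (c : Sym2 V → Bool) {N M : ℕ}
    (x : ZMod N → V) (y : ZMod M → V) : Prop :=
  ∃ (s s' : ZMod N) (t t' : ZMod M),
    (s' = s - 1 ∨ s' = s + 1) ∧ (t' = t - 1 ∨ t' = t + 1) ∧
    G.Adj (x s) (y t) ∧ G.Adj (x s') (y t') ∧
    c s(x s, x s') = c s(x s, y t) ∧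
    c s(x s', y t') = c s(x s, y t) ∧
    c s(y t', y t) = c s(x s, y t)

/-- `G` is a colored generalized sum of the two vertex-disjoint alternating cycles
`C₁ = x` (of length `2n`) and `C₂ = y` (of length `2m`), regarded as 2-edge-colored
graphs: the `x`- and `y`-vertices cover `V(G)` and have disjoint ranges, the edges of
`G` inside each part are exactly the corresponding cycle edges, both cycles are
alternating, and between any two vertices of different parts there is exactly one
(arbitrarily colored) edge. -/
def IsCGSTwoCycles {V : Type*} (G : SimpleGraph V) (c : Sym2 V → Bool) {n m : ℕ}
    (x : ZMod (2 * n) → V) (y : ZMod (2 * m) → V) : Prop :=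
  IsAltCycle G c x ∧ IsAltCycle G c y ∧
  Disjoint (Set.range x) (Set.range y) ∧
  (∀ v : V, v ∈ Set.range x ∪ Set.range y) ∧
  (∀ i j : ZMod (2 * n), G.Adj (x i) (x j) ↔ (j = i + 1 ∨ j = i - 1)) ∧
  (∀ i j : ZMod (2 * m), G.Adj (y i) (y j) ↔ (j = i + 1 ∨ j = i - 1)) ∧
  (∀ (i : ZMod (2 * n)) (j : ZMod (2 * m)), G.Adj (x i) (y j))

/-- The set of exterior edges of a colored generalized sum of the two cycles
`x` and `y`: the edges joining the two parts. -/
def extEdges {V : Type*} {N M : ℕ} (x : ZMod N → V) (y : ZMod M → V) : Set (Sym2 V) :=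
  {e | ∃ i j, e = s(x i, y j)}

/-- One step of the construction of a parallel class: from the exterior edge
`x a - y b`, move to the neighbor of `x a` on `C₁` and the neighbor of `y b` on `C₂`
joined to them by the cycle-edge whose color equals `c s(x a, y b)`. -/
def pstep {V : Type*} (c : Sym2 V → Bool) {N M : ℕ} (x : ZMod N → V) (y : ZMod M → V) :
    ZMod N × ZMod M → ZMod N × ZMod M :=
  fun p =>
    (if c s(x p.1, x (p.1 + 1)) = c s(x p.1, y p.2) then p.1 + 1 else p.1 - 1,
     if c s(y p.2, y (p.2 + 1)) = c s(x p.1, y p.2) then p.2 + 1 else p.2 - 1)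

/-- The parallel class `P_{uv}` of the exterior edge `u v = x a - y b`:
the set of exterior edges obtained from it by iterating `pstep`,
`lcm (2n) (2m)` times. -/
def parallelClass {V : Type*} (c : Sym2 V → Bool) {N M : ℕ}
    (x : ZMod N → V) (y : ZMod M → V) (a : ZMod N) (b : ZMod M) : Set (Sym2 V) :=
  {e | ∃ i < Nat.lcm N M,
    e = s(x ((pstep c x y)^[i] (a, b)).1, y ((pstep c x y)^[i] (a, b)).2)}

/-- The number of red exterior edges incident with `v`. -/
noncomputable def dred {V : Type*} (c : Sym2 V → Bool) {N M : ℕ}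
    (x : ZMod N → V) (y : ZMod M → V) (v : V) : ℕ :=
  {e : Sym2 V | e ∈ extEdges x y ∧ v ∈ e ∧ c e = true}.ncard

/-- The number of blue exterior edges incident with `v`. -/
noncomputable def dblue {V : Type*} (c : Sym2 V → Bool) {N M : ℕ}
    (x : ZMod N → V) (y : ZMod M → V) (v : V) : ℕ :=
  {e : Sym2 V | e ∈ extEdges x y ∧ v ∈ e ∧ c e = false}.ncard

/-!
Write an exterior edge `x i - y j` as the pair `(i, j)` and let `pstep` follow, on both cycles, the
cycle edge that has the color of that exterior edge. If the exterior edge reached had the same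
color again, the two would be a good pair; so `pstep` reverses colors. It is injective: the image
determines the color of the edge, and each vertex of an alternating cycle is recovered from its
neighbor along a given color. Hence the two color classes inject into each other and each of them
contains half of the `2n · 2m` exterior edges.
-/

theorem two_mul_encard_color_eq_card {α : Type*} {f : α → α} {k : α → Bool}
    (hf : Function.Injective f) (hk : ∀ a, k (f a) = !k a) (col : Bool) :
    2 * {a | k a = col}.encard = ENat.card α := by
  have encard_le (b : Bool) : {a | k a = b}.encard ≤ {a | k a = !b}.encard :=
    Set.encard_le_encard_of_injOn (fun a ha ↦ (hk a).trans (congrArg not ha)) hf.injOn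
  have encard_eq : {a | k a = col}.encard = {a | k a = !col}.encard :=
    (encard_le col).antisymm (by simpa only [Bool.not_not] using encard_le (!col))
  have compl_eq : {a | k a = col}ᶜ = {a | k a = !col} :=
    Set.ext fun _ ↦ Bool.eq_not.symm
  calc
    2 * {a | k a = col}.encard = {a | k a = col}.encard + {a | k a = col}ᶜ.encard := by
      rw [compl_eq, ← encard_eq, two_mul]
    _ = ENat.card α := by rw [Set.encard_add_encard_compl, Set.encard_univ]

section ExteriorEdge

variable {V : Type*}

/-- The exterior edge `x i - y j` with coordinates `p = (i, j)`, the pairs on which `pstep` acts. -/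
def exteriorEdge {ι κ : Type*} (x : ι → V) (y : κ → V) (p : ι × κ) : Sym2 V :=
  s(x p.1, y p.2)

theorem exteriorEdge_injective {ι κ : Type*} {x : ι → V} {y : κ → V}
    (hx : Function.Injective x) (hy : Function.Injective y)
    (hd : Disjoint (Set.range x) (Set.range y)) : Function.Injective (exteriorEdge x y) := by
  rintro ⟨i, j⟩ ⟨i', j'⟩ h
  rcases Sym2.eq_iff.1 h with ⟨hi, hj⟩ | ⟨hij, -⟩
  · exact Prod.ext (hx hi) (hy hj)
  · exact absurd hij (Set.disjoint_range_iff.1 hd i j')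

theorem range_exteriorEdge {N M : ℕ} (x : ZMod N → V) (y : ZMod M → V) :
    Set.range (exteriorEdge x y) = extEdges x y := by
  ext e
  simp only [Set.mem_range, Prod.exists, exteriorEdge, extEdges, Set.mem_ofPred_eq, eq_comm]

theorem encard_extEdges_color {N M : ℕ} {x : ZMod N → V} {y : ZMod M → V}
    (hx : Function.Injective x) (hy : Function.Injective y)
    (hd : Disjoint (Set.range x) (Set.range y)) (c : Sym2 V → Bool) (col : Bool) :
    {e ∈ extEdges x y | c e = col}.encard = {p | c (exteriorEdge x y p) = col}.encard := by
  have image_eq : exteriorEdge x y '' {p | c (exteriorEdge x y p) = col} =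
      {e ∈ extEdges x y | c e = col} := by
    rw [← range_exteriorEdge]
    exact Set.image_preimage_eq_range_inter (t := {e | c e = col})
  rw [← image_eq, (exteriorEdge_injective hx hy hd).encard_image]

end ExteriorEdge

section ColorNeighbor

variable {V : Type*} {G : SimpleGraph V} {c : Sym2 V → Bool} {N : ℕ} {x : ZMod N → V}

/-- The position of the neighbor of `x i` along the edge of color `col` of the alternating
cycle `x`. -/
def colorNeighbor (c : Sym2 V → Bool) (x : ZMod N → V) (col : Bool) (i : ZMod N) : ZMod N :=
  if c s(x i, x (i + 1)) = col then i + 1 else i - 1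

theorem colorNeighbor_eq_sub_one_or_add_one (c : Sym2 V → Bool) (x : ZMod N → V) (col : Bool)
    (i : ZMod N) : colorNeighbor c x col i = i - 1 ∨ colorNeighbor c x col i = i + 1 :=
  (ite_eq_or_eq _ _ _).symm

theorem IsAltCycle.color_sub_one (hx : IsAltCycle G c x) (i : ZMod N) :
    c s(x i, x (i - 1)) = !c s(x i, x (i + 1)) := by
  have h := hx.2.2 (i - 1)
  rw [sub_add_cancel, show i - 1 + 2 = i + 1 by ring, Sym2.eq_swap] at h
  exact Bool.eq_not.2 h

theorem IsAltCycle.color_colorNeighbor (hx : IsAltCycle G c x) (col : Bool) (i : ZMod N) :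
    c s(x i, x (colorNeighbor c x col i)) = col := by
  unfold colorNeighbor
  split_ifs with h
  · exact h
  · rw [hx.color_sub_one, Bool.not_eq]
    exact h

theorem IsAltCycle.colorNeighbor_involutive (hx : IsAltCycle G c x) (col : Bool) :
    Function.Involutive (colorNeighbor c x col) := by
  intro i
  by_cases h : c s(x i, x (i + 1)) = col
  · have color_next : c s(x (i + 1), x (i + 1 + 1)) ≠ col := by
      rw [← h, ← Bool.not_eq, ← hx.color_sub_one, add_sub_cancel_right, Sym2.eq_swap]
    simp only [colorNeighbor, if_pos h, if_neg color_next, add_sub_cancel_right]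
  · have color_prev : c s(x (i - 1), x i) = col := by
      rw [Sym2.eq_swap, hx.color_sub_one, Bool.not_eq]
      exact h
    simp only [colorNeighbor, if_neg h, if_pos color_prev, sub_add_cancel]

end ColorNeighbor

section PStep

variable {V : Type*} {G : SimpleGraph V} {c : Sym2 V → Bool} {N M : ℕ}
  {x : ZMod N → V} {y : ZMod M → V}

theorem pstep_eq_colorNeighbor (c : Sym2 V → Bool) (x : ZMod N → V) (y : ZMod M → V)
    (p : ZMod N × ZMod M) :
    pstep c x y p = (colorNeighbor c x (c (exteriorEdge x y p)) p.1,
      colorNeighbor c y (c (exteriorEdge x y p)) p.2) :=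
  rfl

theorem color_exteriorEdge_pstep (hx : IsAltCycle G c x) (hy : IsAltCycle G c y)
    (hadj : ∀ i j, G.Adj (x i) (y j)) (hgp : ¬ HasGoodPair G c x y) (p : ZMod N × ZMod M) :
    c (exteriorEdge x y (pstep c x y p)) = !c (exteriorEdge x y p) := by
  rw [Bool.eq_not, pstep_eq_colorNeighbor]
  intro same_color
  exact hgp ⟨p.1, _, p.2, _, colorNeighbor_eq_sub_one_or_add_one c x _ _,
    colorNeighbor_eq_sub_one_or_add_one c y _ _, hadj _ _, hadj _ _,
    hx.color_colorNeighbor _ _, same_color, Sym2.eq_swap ▸ hy.color_colorNeighbor _ _⟩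

theorem pstep_injective (hx : IsAltCycle G c x) (hy : IsAltCycle G c y)
    (hadj : ∀ i j, G.Adj (x i) (y j)) (hgp : ¬ HasGoodPair G c x y) :
    Function.Injective (pstep c x y) := by
  intro p q h
  have same_color : c (exteriorEdge x y p) = c (exteriorEdge x y q) := by
    rw [← Bool.not_inj_iff, ← color_exteriorEdge_pstep hx hy hadj hgp p,
      ← color_exteriorEdge_pstep hx hy hadj hgp q, h]
  rw [pstep_eq_colorNeighbor, pstep_eq_colorNeighbor, same_color, Prod.mk.injEq] at h
  exact Prod.ext ((hx.colorNeighbor_involutive _).injective h.1)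
    ((hy.colorNeighbor_involutive _).injective h.2)

theorem two_mul_encard_extEdges_color (hx : IsAltCycle G c x) (hy : IsAltCycle G c y)
    (hd : Disjoint (Set.range x) (Set.range y)) (hadj : ∀ i j, G.Adj (x i) (y j))
    (hgp : ¬ HasGoodPair G c x y) (col : Bool) :
    2 * {e ∈ extEdges x y | c e = col}.encard = ENat.card (ZMod N × ZMod M) := by
  rw [encard_extEdges_color hx.1 hy.1 hd]
  exact two_mul_encard_color_eq_card (pstep_injective hx hy hadj hgp)
    (color_exteriorEdge_pstep hx hy hadj hgp) col

end PStep

theorem count_exterior_edges_general {V : Type*} (G : SimpleGraph V) (c : Sym2 V → Bool)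
    {n m : ℕ} (hn : 0 < n) (hm : 0 < m) (x : ZMod (2 * n) → V) (y : ZMod (2 * m) → V)
    (hx : IsAltCycle G c x) (hy : IsAltCycle G c y)
    (hd : Disjoint (Set.range x) (Set.range y)) (hadj : ∀ i j, G.Adj (x i) (y j))
    (hgp : ¬ HasGoodPair G c x y) (col : Bool) :
    {e ∈ extEdges x y | c e = col}.ncard = 2 * m * n := by
  have : NeZero (2 * n) := ⟨by positivity⟩
  have : NeZero (2 * m) := ⟨by positivity⟩
  have half : 2 * {e ∈ extEdges x y | c e = col}.ncard = 2 * n * (2 * m) := by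
    simpa [Set.ncard, Nat.card_prod, Nat.card_zmod] using
      congrArg ENat.toNat (two_mul_encard_extEdges_color hx hy hd hadj hgp col)
  linarith

/-- If `G ∈ C₁ ⊕ C₂` with `C₁, C₂` vertex-disjoint alternating cycles of
lengths `2n` and `2m`, and `G` has no good pair, then `G` has exactly `2mn` red exterior
edges and exactly `2mn` blue exterior edges. -/
theorem count_exterior_edges {V : Type*} (G : SimpleGraph V) (c : Sym2 V → Bool)
    {n m : ℕ} (hn : 0 < n) (hm : 0 < m)
    (x : ZMod (2 * n) → V) (y : ZMod (2 * m) → V)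
    (hG : IsCGSTwoCycles G c x y) (hgp : ¬ HasGoodPair G c x y) :
    {e ∈ extEdges x y | c e = true}.ncard = 2 * m * n ∧
    {e ∈ extEdges x y | c e = false}.ncard = 2 * m * n := by
  obtain ⟨hx, hy, hd, -, -, -, hadj⟩ := hG
  exact ⟨count_exterior_edges_general G c hn hm x y hx hy hd hadj hgp true,
    count_exterior_edges_general G c hn hm x y hx hy hd hadj hgp false⟩
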